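/- Let L ≥ 1 and let an L-layer ReLU network on ℝ^{N₀} be given by matrices W_l ∈ ℝ^{N_{l−1}×N_l}, biases B_l ∈ ℝ^{N_l} (l = 1,…,L), readout w ∈ ℝ^{N_L}, b ∈ ℝ, with decision function f as defined below, and set A = ‖w‖ · ∏_{l=2}^{L} ‖W_l‖₂. Let M ⊆ {1,…,N₀} be a set of missing-feature indices and let x, x̂ ∈ ℝ^{N₀} satisfy x̂_n = x_n for every n ∉ M; set e = x − x̂. If for some ε > 0 one has f(x̂) < −ε and ε ≥ A · ‖W₁ᵀ e‖, then f(x) < 0. -/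

import Mathlib

open Matrix

/-- The Euclidean norm of a finitely-indexed real vector. -/
noncomputable def euclNorm {ι : Type*} [Fintype ι] (v : ι → ℝ) : ℝ :=
  Real.sqrt (∑ j, (v j) ^ 2)

/-- The operator (spectral) norm of the linear map `z ↦ Wᵀz` with respect to
Euclidean norms. -/
noncomputable def specNorm {p q : ℕ} (W : Matrix (Fin p) (Fin q) ℝ) : ℝ :=
  ‖LinearMap.toContinuousLinearMap
      (Matrix.toEuclideanLin (Wᵀ) :
        EuclideanSpace ℝ (Fin p) →ₗ[ℝ] EuclideanSpace ℝ (Fin q))‖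

/-- Layer outputs of an `L`-layer ReLU network: `x^(0) = x` and
`x^(l) = ReLU(Wₗᵀ x^(l-1) + Bₗ)`, where (because of 0-based indexing) the
paper's `W_l, B_l` are `W (l-1), B (l-1)` here, and ReLU is applied
entrywise as `t ↦ max t 0`. -/
def layerOut (N : ℕ → ℕ) (W : ∀ l, Matrix (Fin (N l)) (Fin (N (l + 1))) ℝ)
    (B : ∀ l, Fin (N (l + 1)) → ℝ) (x : Fin (N 0) → ℝ) :
    ∀ l, Fin (N l) → ℝ
  | 0 => x
  | l + 1 => fun j => max (((W l)ᵀ.mulVec (layerOut N W B x l)) j + B l j) 0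

theorem euclNorm_eq_norm_toLp {ι : Type*} [Fintype ι] (v : ι → ℝ) :
    euclNorm v = ‖WithLp.toLp 2 v‖ := by
  simp [euclNorm, EuclideanSpace.norm_eq]

theorem euclNorm_nonneg {ι : Type*} [Fintype ι] (v : ι → ℝ) : 0 ≤ euclNorm v :=
  Real.sqrt_nonneg _

theorem specNorm_nonneg {p q : ℕ} (W : Matrix (Fin p) (Fin q) ℝ) : 0 ≤ specNorm W :=
  norm_nonneg _

theorem euclNorm_transpose_mulVec_le {p q : ℕ} (W : Matrix (Fin p) (Fin q) ℝ)
    (v : Fin p → ℝ) : euclNorm (Wᵀ *ᵥ v) ≤ specNorm W * euclNorm v := by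
  simpa [euclNorm_eq_norm_toLp, specNorm] using
    (LinearMap.toContinuousLinearMap (Matrix.toEuclideanLin Wᵀ)).le_opNorm (WithLp.toLp 2 v)

theorem euclNorm_le_of_abs_le {ι : Type*} [Fintype ι] {u v : ι → ℝ}
    (h : ∀ j, |u j| ≤ |v j|) : euclNorm u ≤ euclNorm v :=
  Real.sqrt_le_sqrt (Finset.sum_le_sum fun j _ => sq_le_sq.mpr (h j))

/-- Entrywise ReLU is nonexpansive, so a layer expands distances no more than its linear part. -/
theorem euclNorm_layerOut_succ_sub_le (N : ℕ → ℕ)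
    (W : ∀ l, Matrix (Fin (N l)) (Fin (N (l + 1))) ℝ) (B : ∀ l, Fin (N (l + 1)) → ℝ)
    (x y : Fin (N 0) → ℝ) (l : ℕ) :
    euclNorm (layerOut N W B x (l + 1) - layerOut N W B y (l + 1)) ≤
      euclNorm ((W l)ᵀ *ᵥ (layerOut N W B x l - layerOut N W B y l)) := by
  refine euclNorm_le_of_abs_le fun j => ?_
  rw [Matrix.mulVec_sub]
  simpa [layerOut] using abs_max_sub_max_le_abs
    (((W l)ᵀ *ᵥ layerOut N W B x l) j + B l j) (((W l)ᵀ *ᵥ layerOut N W B y l) j + B l j) 0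

theorem euclNorm_layerOut_sub_le (N : ℕ → ℕ)
    (W : ∀ l, Matrix (Fin (N l)) (Fin (N (l + 1))) ℝ) (B : ∀ l, Fin (N (l + 1)) → ℝ)
    (x y : Fin (N 0) → ℝ) {L : ℕ} (hL : 1 ≤ L) :
    euclNorm (layerOut N W B x L - layerOut N W B y L) ≤
      (∏ l ∈ Finset.Ico 1 L, specNorm (W l)) * euclNorm ((W 0)ᵀ *ᵥ (x - y)) := by
  induction L, hL using Nat.le_induction with
  | base => simpa [layerOut] using euclNorm_layerOut_succ_sub_le N W B x y 0
  | succ l hl ih =>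
    calc _ ≤ _ := euclNorm_layerOut_succ_sub_le N W B x y l
      _ ≤ _ := euclNorm_transpose_mulVec_le _ _
      _ ≤ _ := mul_le_mul_of_nonneg_left ih (specNorm_nonneg _)
      _ = _ := by rw [Finset.prod_Ico_succ_top hl]; ring

/-- The negative-class case of Proposition 2 (multilayer-perceptron sufficient
condition): if the reconstruction `x̂` matches `x` on all observed
(non-missing) features and the margin `ε` dominates `A·‖W₁ᵀe‖` with
`A = ‖w‖·∏_{l=2}^L ‖Wₗ‖₂` and `e = x − x̂`, then the ReLU network classifies
`x` in the same (negative) class as `x̂`. -/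
theorem prop2_neg (L : ℕ) (hL : 1 ≤ L) (N : ℕ → ℕ)
    (W : ∀ l, Matrix (Fin (N l)) (Fin (N (l + 1))) ℝ)
    (B : ∀ l, Fin (N (l + 1)) → ℝ)
    (w : Fin (N L) → ℝ) (b : ℝ)
    (f : (Fin (N 0) → ℝ) → ℝ)
    (hf : ∀ x, f x = (∑ j, w j * layerOut N W B x L j) + b)
    (A : ℝ) (hA : A = euclNorm w * ∏ l ∈ Finset.Ico 1 L, specNorm (W l))
    (M : Finset (Fin (N 0))) (x xhat : Fin (N 0) → ℝ)
    (hobs : ∀ n, n ∉ M → xhat n = x n)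
    (e : Fin (N 0) → ℝ) (he : e = x - xhat)
    (ε : ℝ) (hε : 0 < ε)
    (hsep : f xhat < -ε)
    (herr : ε ≥ A * euclNorm ((W 0)ᵀ.mulVec e)) :
    f x < 0 := by
  have hcs : ∑ j, w j * (layerOut N W B x L - layerOut N W B xhat L) j ≤
      euclNorm w * euclNorm (layerOut N W B x L - layerOut N W B xhat L) :=
    Real.sum_mul_le_sqrt_mul_sqrt _ _ _
  have hlip := mul_le_mul_of_nonneg_left (euclNorm_layerOut_sub_le N W B x xhat hL)
    (euclNorm_nonneg w)
  simp only [Pi.sub_apply, mul_sub, Finset.sum_sub_distrib] at hcs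
  rw [hA, he, mul_assoc] at herr
  rw [hf] at hsep ⊢
  linarith
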